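/- Let 0 < λ₁ < λ₂ < λ₃, set m = (λ₂² − λ₁²)/(λ₃² − λ₁²), μ(m) = E(m)/K(m), and w² = λ₃² − (λ₃² − λ₁²)·μ(m). Then the second moment of the KdV wave field in the genus-1 soliton condensate satisfies (16/(3π))·∫₀^{λ₁} η⁴(w² − η²)/√((λ₁² − η²)(λ₂² − η²)(λ₃² − η²)) dη + (16/(3π))·∫_{λ₂}^{λ₃} η⁴(η² − w²)/√((η² − λ₁²)(η² − λ₂²)(λ₃² − η²)) dη = (2(λ₁² + λ₂² + λ₃²)/3)·(λ₁² + λ₂² − λ₃² + 2(λ₃² − λ₁²)·μ(m)) + (λ₁⁴ + λ₂⁴ + λ₃⁴ − 2λ₁²λ₂² − 2λ₂²λ₃² − 2λ₁²λ₃²)/3. -/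

import Mathlib

/-- The complete elliptic integral of the first kind, `K(m) = ∫₀^{π/2} dθ/√(1 - m sin²θ)`. -/
noncomputable def ellipticK (m : ℝ) : ℝ :=
  ∫ θ in (0:ℝ)..(Real.pi / 2), 1 / Real.sqrt (1 - m * Real.sin θ ^ 2)

/-- The complete elliptic integral of the second kind, `E(m) = ∫₀^{π/2} √(1 - m sin²θ) dθ`. -/
noncomputable def ellipticE (m : ℝ) : ℝ :=
  ∫ θ in (0:ℝ)..(Real.pi / 2), Real.sqrt (1 - m * Real.sin θ ^ 2)

/-!
Write `a, b, c` for `l1², l2², l3²` and `P(y) = y² (y - w²)`. After the substitution `y = η²` the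
two band integrals become, up to the factor `π / 2`, the means of `-P(x) / √((b - x) (c - x))` and
`P(t) / √(t (t - a))` under the arcsine laws on `[0, a]` and `[b, c]`. Each of the two reciprocal
square roots is the Stieltjes transform of the *other* arcsine law: `1 / √((b - x) (c - x))` is the
mean of `1 / (t - x)` over `[b, c]`, and `1 / √(t (t - a))` is its mean over `[0, a]`. By Fubini the
sum is therefore the double mean of the divided difference `(P(t) - P(x)) / (t - x)`, a quadratic
polynomial in `x` and in `t`, so only the first two moments of the arcsine laws enter. This is a
real-variable form of collapsing the contour around both cuts onto the residue at infinity.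
-/

open Real Set MeasureTheory

/-- The path from `p` at `θ = 0` to `q` at `θ = π / 2` whose image of the uniform law on
`[0, π / 2]` is the arcsine law on the segment between `p` and `q`. -/
noncomputable def arcsineParam (p q θ : ℝ) : ℝ :=
  p * cos θ ^ 2 + q * sin θ ^ 2

/-- The mean of `f` under the arcsine law on the segment between `p` and `q`, which for `p < q` has
density `1 / (π √((t - p) (q - t)))`. It is defined through the trigonometric parametrization, which
has no endpoint singularities. -/
noncomputable def arcsineMean (p q : ℝ) (f : ℝ → ℝ) : ℝ :=
  2 / π * ∫ θ in (0 : ℝ)..(π / 2), f (arcsineParam p q θ)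

section ArcsineLaw

variable {p q r s : ℝ}

lemma arcsineParam_zero (p q : ℝ) : arcsineParam p q 0 = p := by
  simp [arcsineParam]

lemma arcsineParam_pi_div_two (p q : ℝ) : arcsineParam p q (π / 2) = q := by
  simp [arcsineParam]

lemma arcsineParam_eq_add_mul_sin_sq (p q θ : ℝ) :
    arcsineParam p q θ = p + (q - p) * sin θ ^ 2 := by
  rw [arcsineParam, cos_sq']
  ring

lemma arcsineParam_sub_const (p q z θ : ℝ) :
    arcsineParam p q θ - z = arcsineParam (p - z) (q - z) θ := by
  simp only [arcsineParam_eq_add_mul_sin_sq]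
  ring

lemma const_sub_arcsineParam (p q z θ : ℝ) :
    z - arcsineParam p q θ = arcsineParam (z - p) (z - q) θ := by
  simp only [arcsineParam_eq_add_mul_sin_sq]
  ring

lemma arcsineParam_mem_uIcc (p q θ : ℝ) : arcsineParam p q θ ∈ uIcc p q := by
  rw [← segment_eq_uIcc]
  exact ⟨cos θ ^ 2, sin θ ^ 2, sq_nonneg _, sq_nonneg _, cos_sq_add_sin_sq θ, by
    simp only [arcsineParam, smul_eq_mul, mul_comm]⟩

lemma arcsineParam_pos (hp : 0 < p) (hq : 0 < q) (θ : ℝ) : 0 < arcsineParam p q θ :=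
  (lt_min hp hq).trans_le (arcsineParam_mem_uIcc p q θ).1

@[fun_prop]
lemma continuous_arcsineParam (p q : ℝ) : Continuous (arcsineParam p q) := by
  unfold arcsineParam
  fun_prop

lemma hasDerivAt_arcsineParam (p q θ : ℝ) :
    HasDerivAt (arcsineParam p q) (2 * (q - p) * (sin θ * cos θ)) θ := by
  rw [funext (arcsineParam_eq_add_mul_sin_sq p q)]
  refine ((((hasDerivAt_sin θ).fun_pow 2).const_mul (q - p)).const_add p).congr_deriv ?_
  push_cast
  ring

lemma arcsineMean_congr {f g : ℝ → ℝ} (hfg : EqOn f g (uIcc p q)) :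
    arcsineMean p q f = arcsineMean p q g := by
  simp only [arcsineMean, hfg (arcsineParam_mem_uIcc p q _)]

lemma arcsineMean_const_mul (p q k : ℝ) (f : ℝ → ℝ) :
    arcsineMean p q (fun t ↦ k * f t) = k * arcsineMean p q f := by
  simp only [arcsineMean, intervalIntegral.integral_const_mul]
  ring

lemma continuous_comp_arcsineParam {f : ℝ → ℝ} (hf : ContinuousOn f (uIcc p q)) :
    Continuous fun θ ↦ f (arcsineParam p q θ) :=
  hf.comp_continuous (continuous_arcsineParam p q) (arcsineParam_mem_uIcc p q)

lemma arcsineMean_sub {f g : ℝ → ℝ} (hf : ContinuousOn f (uIcc p q))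
    (hg : ContinuousOn g (uIcc p q)) :
    arcsineMean p q (fun t ↦ f t - g t) = arcsineMean p q f - arcsineMean p q g := by
  simp only [arcsineMean]
  rw [intervalIntegral.integral_sub
    ((continuous_comp_arcsineParam hf).intervalIntegrable _ _)
    ((continuous_comp_arcsineParam hg).intervalIntegrable _ _), mul_sub]

lemma continuousOn_arcsineMean {X : Type*} [TopologicalSpace X] [FirstCountableTopology X]
    {S : Set X} {F : X → ℝ → ℝ} (hF : ContinuousOn F.uncurry (S ×ˢ uIcc p q)) :
    ContinuousOn (fun x ↦ arcsineMean p q (F x)) S := by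
  rw [continuousOn_iff_continuous_domRestrict]
  have hcomp : Continuous fun z : S × ℝ ↦ F z.1 (arcsineParam p q z.2) :=
    hF.comp_continuous (f := fun z : S × ℝ ↦ ((z.1 : X), arcsineParam p q z.2)) (by fun_prop)
      fun z ↦ ⟨z.1.2, arcsineParam_mem_uIcc p q z.2⟩
  exact continuous_const.mul
    (intervalIntegral.continuous_parametric_intervalIntegral_of_continuous' hcomp _ _)

lemma arcsineMean_comm {F : ℝ → ℝ → ℝ} (hF : ContinuousOn F.uncurry (uIcc p q ×ˢ uIcc r s)) :
    arcsineMean p q (fun x ↦ arcsineMean r s (F x)) =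
      arcsineMean r s fun y ↦ arcsineMean p q fun x ↦ F x y := by
  have hcomp : Continuous fun z : ℝ × ℝ ↦ F (arcsineParam p q z.1) (arcsineParam r s z.2) :=
    hF.comp_continuous
      (f := fun z : ℝ × ℝ ↦ (arcsineParam p q z.1, arcsineParam r s z.2)) (by fun_prop)
      fun z ↦ ⟨arcsineParam_mem_uIcc p q z.1, arcsineParam_mem_uIcc r s z.2⟩
  have hintegrable : IntegrableOn
      (Function.uncurry fun α β ↦ F (arcsineParam p q α) (arcsineParam r s β))
      (uIoc 0 (π / 2) ×ˢ uIoc 0 (π / 2)) :=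
    (hcomp.continuousOn.integrableOn_compact (isCompact_uIcc.prod isCompact_uIcc)).mono_set
      (prod_mono uIoc_subset_uIcc uIoc_subset_uIcc)
  simp only [arcsineMean, intervalIntegral.integral_const_mul]
  rw [intervalIntegral_intervalIntegral_swap hintegrable]

lemma arcsineMean_arcsineMean_sub {F G : ℝ → ℝ → ℝ}
    (hF : ContinuousOn F.uncurry (uIcc p q ×ˢ uIcc r s))
    (hG : ContinuousOn G.uncurry (uIcc p q ×ˢ uIcc r s)) :
    arcsineMean p q (fun x ↦ arcsineMean r s fun y ↦ F x y - G x y) =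
      arcsineMean p q (fun x ↦ arcsineMean r s (F x)) -
        arcsineMean p q (fun x ↦ arcsineMean r s (G x)) := by
  rw [← arcsineMean_sub (continuousOn_arcsineMean hF) (continuousOn_arcsineMean hG)]
  exact arcsineMean_congr fun x hx ↦
    arcsineMean_sub (hF.uncurry_left x hx) (hG.uncurry_left x hx)

lemma integral_sin_sq_zero_pi_div_two : ∫ θ in (0 : ℝ)..(π / 2), sin θ ^ 2 = π / 4 := by
  rw [integral_sin_sq, sin_zero, cos_pi_div_two]
  ring

lemma integral_sin_pow_four_zero_pi_div_two :
    ∫ θ in (0 : ℝ)..(π / 2), sin θ ^ 4 = 3 * π / 16 := by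
  rw [integral_sin_pow 2, integral_sin_sq_zero_pi_div_two, sin_zero, cos_pi_div_two]
  push_cast
  ring

lemma arcsineMean_quadratic (p q A B C : ℝ) :
    arcsineMean p q (fun t ↦ A * t ^ 2 + B * t + C) =
      A * (3 * p ^ 2 + 2 * p * q + 3 * q ^ 2) / 8 + B * (p + q) / 2 + C := by
  have hexpand (θ : ℝ) : A * arcsineParam p q θ ^ 2 + B * arcsineParam p q θ + C =
      A * (q - p) ^ 2 * sin θ ^ 4 + (2 * A * p + B) * (q - p) * sin θ ^ 2 +
        (A * p ^ 2 + B * p + C) := by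
    rw [arcsineParam_eq_add_mul_sin_sq]
    ring
  have hintegrable {f : ℝ → ℝ} (hf : Continuous f) : IntervalIntegrable f volume 0 (π / 2) :=
    hf.intervalIntegrable _ _
  simp only [arcsineMean, hexpand]
  rw [intervalIntegral.integral_add (hintegrable (by fun_prop)) (hintegrable (by fun_prop)),
    intervalIntegral.integral_add (hintegrable (by fun_prop)) (hintegrable (by fun_prop)),
    intervalIntegral.integral_const_mul, intervalIntegral.integral_const_mul,
    intervalIntegral.integral_const, integral_sin_sq_zero_pi_div_two,
    integral_sin_pow_four_zero_pi_div_two, smul_eq_mul]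
  field_simp
  ring

-- `arctan (q / p * tan θ)` is singular at `π / 2`; by the subtraction formula it differs from `θ`
-- by the arctangent below, which is smooth on the whole line.
lemma hasDerivAt_add_arctan_div_arcsineParam (hp : 0 < p) (hq : 0 < q) (θ : ℝ) :
    HasDerivAt (fun θ ↦ θ + arctan ((q - p) * (sin θ * cos θ) / arcsineParam p q θ))
      (p * q / arcsineParam (p ^ 2) (q ^ 2) θ) θ := by
  have hD : 0 < arcsineParam p q θ := arcsineParam_pos hp hq θ
  have hQ : 0 < arcsineParam (p ^ 2) (q ^ 2) θ := arcsineParam_pos (by positivity) (by positivity) θ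
  have hnum : HasDerivAt (fun θ ↦ (q - p) * (sin θ * cos θ))
      ((q - p) * (cos θ ^ 2 - sin θ ^ 2)) θ := by
    refine (((hasDerivAt_sin θ).fun_mul (hasDerivAt_cos θ)).const_mul (q - p)).congr_deriv ?_
    ring
  have hsum_sq : arcsineParam p q θ ^ 2 + ((q - p) * (sin θ * cos θ)) ^ 2 =
      arcsineParam (p ^ 2) (q ^ 2) θ := by
    simp only [arcsineParam_eq_add_mul_sin_sq, mul_pow, cos_sq']
    ring
  have hwronskian : (q - p) * (cos θ ^ 2 - sin θ ^ 2) * arcsineParam p q θ -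
      (q - p) * (sin θ * cos θ) * (2 * (q - p) * (sin θ * cos θ)) =
      p * q - arcsineParam (p ^ 2) (q ^ 2) θ := by
    simp only [arcsineParam_eq_add_mul_sin_sq]
    linear_combination ((q - p) * (p + (q - p) * sin θ ^ 2) -
      2 * (q - p) ^ 2 * sin θ ^ 2) * sin_sq_add_cos_sq θ
  refine ((hasDerivAt_id θ).add
    (hnum.div (hasDerivAt_arcsineParam p q θ) hD.ne').arctan).congr_deriv ?_
  rw [hwronskian, Pi.div_apply, div_pow, one_add_div (by positivity), hsum_sq]
  field_simp
  ring

lemma arcsineMean_inv (hp : 0 < p) (hq : 0 < q) :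
    arcsineMean p q (fun t ↦ t⁻¹) = (√(p * q))⁻¹ := by
  have hsp : 0 < √p := sqrt_pos.2 hp
  have hsq : 0 < √q := sqrt_pos.2 hq
  have hderiv (θ : ℝ) := hasDerivAt_add_arctan_div_arcsineParam hsp hsq θ
  simp only [sq_sqrt hp.le, sq_sqrt hq.le] at hderiv
  have hcont : Continuous fun θ ↦ √p * √q / arcsineParam p q θ :=
    continuous_const.div (continuous_arcsineParam p q) fun θ ↦ (arcsineParam_pos hp hq θ).ne'
  have hscaled : √p * √q * ∫ θ in (0 : ℝ)..(π / 2), (arcsineParam p q θ)⁻¹ = π / 2 := by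
    simp only [← intervalIntegral.integral_const_mul, ← div_eq_mul_inv]
    rw [intervalIntegral.integral_eq_sub_of_hasDerivAt (fun θ _ ↦ hderiv θ)
      (hcont.intervalIntegrable _ _)]
    simp
  rw [arcsineMean, eq_div_of_mul_eq (by positivity) ((mul_comm _ _).trans hscaled), sqrt_mul hp.le]
  field_simp

lemma arcsineMean_inv_sub_const {z : ℝ} (hp : z < p) (hq : z < q) :
    arcsineMean p q (fun t ↦ (t - z)⁻¹) = (√((p - z) * (q - z)))⁻¹ := by
  simpa only [arcsineMean, arcsineParam_sub_const] using
    arcsineMean_inv (sub_pos.2 hp) (sub_pos.2 hq)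

lemma arcsineMean_inv_const_sub {z : ℝ} (hp : p < z) (hq : q < z) :
    arcsineMean p q (fun t ↦ (z - t)⁻¹) = (√((z - p) * (z - q)))⁻¹ := by
  simpa only [arcsineMean, const_sub_arcsineParam] using
    arcsineMean_inv (sub_pos.2 hp) (sub_pos.2 hq)

theorem arcsineMean_div_sqrt_sub_arcsineMean_div_sqrt {P : ℝ → ℝ} (hpq : p ≤ q) (hqr : q < r)
    (hrs : r ≤ s) (hPpq : ContinuousOn P (Icc p q)) (hPrs : ContinuousOn P (Icc r s)) :
    arcsineMean r s (fun t ↦ P t / √((t - p) * (t - q))) -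
        arcsineMean p q (fun x ↦ P x / √((r - x) * (s - x))) =
      arcsineMean r s fun t ↦ arcsineMean p q fun x ↦ slope P x t := by
  rw [← uIcc_of_le hpq] at hPpq
  rw [← uIcc_of_le hrs] at hPrs
  have hlt {t x : ℝ} (ht : t ∈ uIcc r s) (hx : x ∈ uIcc p q) : x < t := by
    rw [uIcc_of_le hrs] at ht
    rw [uIcc_of_le hpq] at hx
    exact hx.2.trans_lt (hqr.trans_le ht.1)
  have hkernel : ContinuousOn (fun z : ℝ × ℝ ↦ (z.1 - z.2)⁻¹) (uIcc r s ×ˢ uIcc p q) :=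
    ContinuousOn.inv₀ (by fun_prop) fun z hz ↦ (sub_pos.2 (hlt hz.1 hz.2)).ne'
  have hupper : ContinuousOn (Function.uncurry fun t x ↦ P t * (t - x)⁻¹)
      (uIcc r s ×ˢ uIcc p q) :=
    (hPrs.comp continuousOn_fst fun _ hz ↦ hz.1).mul hkernel
  have hlower : ContinuousOn (Function.uncurry fun t x ↦ P x * (t - x)⁻¹)
      (uIcc r s ×ˢ uIcc p q) :=
    (hPpq.comp continuousOn_snd fun _ hz ↦ hz.2).mul hkernel
  calc
    _ = arcsineMean r s (fun t ↦ arcsineMean p q fun x ↦ P t * (t - x)⁻¹) -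
          arcsineMean p q (fun x ↦ arcsineMean r s fun t ↦ P x * (t - x)⁻¹) := by
      congr 1 <;> refine arcsineMean_congr fun y hy ↦ ?_
      · rw [arcsineMean_const_mul, div_eq_mul_inv,
          arcsineMean_inv_const_sub (hlt hy left_mem_uIcc) (hlt hy right_mem_uIcc)]
      · rw [arcsineMean_const_mul, div_eq_mul_inv,
          arcsineMean_inv_sub_const (hlt left_mem_uIcc hy) (hlt right_mem_uIcc hy)]
    _ = arcsineMean r s (fun t ↦ arcsineMean p q fun x ↦ P t * (t - x)⁻¹ - P x * (t - x)⁻¹) := by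
      rw [arcsineMean_arcsineMean_sub hupper hlower, arcsineMean_comm hlower]
    _ = _ := by simp only [slope_def_field, div_eq_mul_inv, sub_mul]

lemma slope_sq_mul_sub_const {x t : ℝ} (w : ℝ) (hxt : x ≠ t) :
    slope (fun y ↦ y ^ 2 * (y - w)) x t = 1 * x ^ 2 + (t - w) * x + (t ^ 2 - w * t) := by
  have := sub_ne_zero.2 hxt.symm
  rw [slope_def_field]
  field_simp
  ring

lemma arcsineMean_arcsineMean_slope_sq_mul_sub_const (w : ℝ) (hpq : p ≤ q) (hqr : q < r)
    (hrs : r ≤ s) :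
    arcsineMean r s (fun t ↦ arcsineMean p q fun x ↦ slope (fun y ↦ y ^ 2 * (y - w)) x t) =
      (3 * r ^ 2 + 2 * r * s + 3 * s ^ 2) / 8 + ((p + q) / 2 - w) * (r + s) / 2 +
        ((3 * p ^ 2 + 2 * p * q + 3 * q ^ 2) / 8 - w * (p + q) / 2) := by
  have hinner {t : ℝ} (ht : t ∈ uIcc r s) :
      arcsineMean p q (fun x ↦ slope (fun y ↦ y ^ 2 * (y - w)) x t) =
        1 * t ^ 2 + ((p + q) / 2 - w) * t +
          ((3 * p ^ 2 + 2 * p * q + 3 * q ^ 2) / 8 - w * (p + q) / 2) := by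
    rw [uIcc_of_le hrs] at ht
    have hne {x : ℝ} (hx : x ∈ uIcc p q) : x ≠ t := by
      rw [uIcc_of_le hpq] at hx
      exact (hx.2.trans_lt (hqr.trans_le ht.1)).ne
    rw [arcsineMean_congr fun x hx ↦ slope_sq_mul_sub_const w (hne hx), arcsineMean_quadratic]
    ring
  rw [arcsineMean_congr fun t ht ↦ hinner ht, arcsineMean_quadratic]
  ring

lemma integral_div_sqrt_eq_pi_mul_arcsineMean (hpq : p < q) (f : ℝ → ℝ) :
    ∫ t in p..q, f t / √((t - p) * (q - t)) = π * arcsineMean p q f := by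
  have hpos {θ : ℝ} (hθ : θ ∈ uIoo 0 (π / 2)) : 0 < (q - p) * (sin θ * cos θ) := by
    rw [uIoo_of_le pi_div_two_pos.le] at hθ
    have hsin := sin_pos_of_pos_of_lt_pi hθ.1 (by linarith [hθ.2, pi_pos])
    have hcos := cos_pos_of_mem_Ioo ⟨by linarith [hθ.1, pi_pos], hθ.2⟩
    exact mul_pos (sub_pos.2 hpq) (mul_pos hsin hcos)
  have hsubst := intervalIntegral.integral_comp_mul_deriv_of_deriv_nonneg
    (g := fun t ↦ f t / √((t - p) * (q - t))) (continuous_arcsineParam p q).continuousOn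
    (fun θ _ ↦ hasDerivAt_arcsineParam p q θ) (fun θ hθ ↦ by linarith [hpos hθ])
  rw [arcsineParam_zero, arcsineParam_pi_div_two] at hsubst
  rw [← hsubst, arcsineMean, ← mul_assoc, mul_div_cancel₀ _ pi_ne_zero,
    ← intervalIntegral.integral_const_mul]
  refine intervalIntegral.integral_congr_uIoo fun θ hθ ↦ ?_
  have hradicand : (arcsineParam p q θ - p) * (q - arcsineParam p q θ) =
      ((q - p) * (sin θ * cos θ)) ^ 2 := by
    rw [arcsineParam_eq_add_mul_sin_sq, mul_pow, mul_pow, cos_sq']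
    ring
  simp only [Function.comp_apply, hradicand, sqrt_sq (hpos hθ).le]
  rw [mul_assoc 2, mul_left_comm, div_mul_cancel₀ _ (hpos hθ).ne']

end ArcsineLaw

lemma integral_mul_comp_sq_div_sqrt {l r : ℝ} (hl : 0 ≤ l) (hlr : l < r) (f : ℝ → ℝ) :
    ∫ η in l..r, η * f (η ^ 2) / √((η ^ 2 - l ^ 2) * (r ^ 2 - η ^ 2)) =
      π / 2 * arcsineMean (l ^ 2) (r ^ 2) f := by
  have hsubst := intervalIntegral.integral_comp_mul_deriv_of_deriv_nonneg (a := l) (b := r)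
    (f := fun η ↦ η ^ 2) (f' := fun η ↦ 2 * η)
    (g := fun t ↦ f t / √((t - l ^ 2) * (r ^ 2 - t))) (by fun_prop)
    (fun η _ ↦ by simpa using hasDerivAt_pow 2 η)
    (fun η hη ↦ by
      rw [min_eq_left hlr.le] at hη
      linarith [hη.1])
  rw [integral_div_sqrt_eq_pi_mul_arcsineMean (pow_lt_pow_left₀ hlr hl two_ne_zero)] at hsubst
  rw [div_mul_eq_mul_div, ← hsubst, div_eq_inv_mul, ← intervalIntegral.integral_const_mul]
  congr 1 with η
  simp only [Function.comp_apply]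
  ring

lemma integral_lower_band {l : ℝ} (hl : 0 < l) (b c : ℝ) (f : ℝ → ℝ) :
    ∫ η in 0..l, f (η ^ 2) / √((l ^ 2 - η ^ 2) * (b - η ^ 2) * (c - η ^ 2)) =
      π / 2 * arcsineMean 0 (l ^ 2) fun x ↦ f x / √((b - x) * (c - x)) := by
  have hmean := integral_mul_comp_sq_div_sqrt le_rfl hl fun x ↦ f x / √((b - x) * (c - x))
  rw [zero_pow two_ne_zero] at hmean
  rw [← hmean]
  refine intervalIntegral.integral_congr_Ioo_of_le hl.le fun η hη ↦ ?_
  have hη0 : 0 < η := hη.1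
  have hηl : 0 ≤ l ^ 2 - η ^ 2 := sub_nonneg.2 (pow_le_pow_left₀ hη0.le hη.2.le 2)
  simp only [sub_zero]
  rw [mul_assoc, sqrt_mul hηl, sqrt_mul (sq_nonneg η), sqrt_sq hη0.le, mul_div_mul_left _ _ hη0.ne',
    div_div, mul_comm √(l ^ 2 - η ^ 2)]

lemma integral_upper_band {l r : ℝ} (hl : 0 ≤ l) (hlr : l < r) (a : ℝ) (f : ℝ → ℝ) :
    ∫ η in l..r, f (η ^ 2) / √((η ^ 2 - a) * (η ^ 2 - l ^ 2) * (r ^ 2 - η ^ 2)) =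
      π / 2 * arcsineMean (l ^ 2) (r ^ 2) fun t ↦ f t / √(t * (t - a)) := by
  rw [← integral_mul_comp_sq_div_sqrt hl hlr]
  refine intervalIntegral.integral_congr_Ioo_of_le hlr.le fun η hη ↦ ?_
  have hη0 : 0 < η := hl.trans_lt hη.1
  have hηl : 0 ≤ η ^ 2 - l ^ 2 := sub_nonneg.2 (pow_le_pow_left₀ hl hη.1.le 2)
  have hηr : 0 ≤ r ^ 2 - η ^ 2 := sub_nonneg.2 (pow_le_pow_left₀ hη0.le hη.2.le 2)
  rw [mul_assoc, sqrt_mul' _ (mul_nonneg hηl hηr), sqrt_mul (sq_nonneg η), sqrt_sq hη0.le,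
    ← mul_div_assoc, mul_div_mul_left _ _ hη0.ne', div_div]

theorem integral_upper_band_sub_integral_lower_band {l₁ l₂ l₃ : ℝ} {P : ℝ → ℝ} (h₁ : 0 < l₁)
    (h₁₂ : l₁ < l₂) (h₂₃ : l₂ < l₃) (hP₁ : ContinuousOn P (Icc 0 (l₁ ^ 2)))
    (hP₂₃ : ContinuousOn P (Icc (l₂ ^ 2) (l₃ ^ 2))) :
    (∫ η in l₂..l₃, P (η ^ 2) / √((η ^ 2 - l₁ ^ 2) * (η ^ 2 - l₂ ^ 2) * (l₃ ^ 2 - η ^ 2))) -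
        ∫ η in 0..l₁, P (η ^ 2) / √((l₁ ^ 2 - η ^ 2) * (l₂ ^ 2 - η ^ 2) * (l₃ ^ 2 - η ^ 2)) =
      π / 2 * arcsineMean (l₂ ^ 2) (l₃ ^ 2) fun t ↦ arcsineMean 0 (l₁ ^ 2) fun x ↦ slope P x t := by
  have h₂ : 0 < l₂ := h₁.trans h₁₂
  rw [integral_lower_band h₁, integral_upper_band h₂.le h₂₃, ← mul_sub,
    ← arcsineMean_div_sqrt_sub_arcsineMean_div_sqrt (sq_nonneg l₁)
      (pow_lt_pow_left₀ h₁₂ h₁.le two_ne_zero) (pow_le_pow_left₀ h₂.le h₂₃.le 2) hP₁ hP₂₃]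
  simp only [sub_zero]

theorem genus1_condensate_second_moment_general {l₁ l₂ l₃ : ℝ} (h₁ : 0 < l₁) (h₁₂ : l₁ < l₂)
    (h₂₃ : l₂ < l₃) (wSq : ℝ) :
    16 / (3 * π) *
        (∫ η in 0..l₁, η ^ 4 * (wSq - η ^ 2) /
          √((l₁ ^ 2 - η ^ 2) * (l₂ ^ 2 - η ^ 2) * (l₃ ^ 2 - η ^ 2))) +
      16 / (3 * π) *
        (∫ η in l₂..l₃, η ^ 4 * (η ^ 2 - wSq) /
          √((η ^ 2 - l₁ ^ 2) * (η ^ 2 - l₂ ^ 2) * (l₃ ^ 2 - η ^ 2))) =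
      2 * (l₁ ^ 2 + l₂ ^ 2 + l₃ ^ 2) / 3 * (l₁ ^ 2 + l₂ ^ 2 + l₃ ^ 2 - 2 * wSq) +
        (l₁ ^ 4 + l₂ ^ 4 + l₃ ^ 4 - 2 * l₁ ^ 2 * l₂ ^ 2 - 2 * l₂ ^ 2 * l₃ ^ 2 -
          2 * l₁ ^ 2 * l₃ ^ 2) / 3 := by
  have h₂ : 0 < l₂ := h₁.trans h₁₂
  have hlower (η : ℝ) : η ^ 4 * (wSq - η ^ 2) = -((η ^ 2) ^ 2 * (η ^ 2 - wSq)) := by ring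
  have hupper (η : ℝ) : η ^ 4 * (η ^ 2 - wSq) = (η ^ 2) ^ 2 * (η ^ 2 - wSq) := by ring
  have hbands := integral_upper_band_sub_integral_lower_band (P := fun x ↦ x ^ 2 * (x - wSq))
    h₁ h₁₂ h₂₃ (by fun_prop) (by fun_prop)
  rw [arcsineMean_arcsineMean_slope_sq_mul_sub_const wSq (sq_nonneg l₁)
    (pow_lt_pow_left₀ h₁₂ h₁.le two_ne_zero) (pow_le_pow_left₀ h₂.le h₂₃.le 2)] at hbands
  simp only [hlower, hupper, neg_div, intervalIntegral.integral_neg]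
  rw [← mul_add, neg_add_eq_sub, hbands]
  field_simp
  ring

/-- The second moment of the KdV wave field in the genus-1 soliton condensate:
with `m = (λ₂²-λ₁²)/(λ₃²-λ₁²)`, `μ(m) = E(m)/K(m)` and `w² = λ₃² - (λ₃²-λ₁²)μ(m)`,
`⟨φ²⟩ = (16/3)∫_{Γ⁺} η³ u(η) dη
      = (2(λ₁²+λ₂²+λ₃²)/3)⟨φ⟩ + (λ₁⁴+λ₂⁴+λ₃⁴-2λ₁²λ₂²-2λ₂²λ₃²-2λ₁²λ₃²)/3`. -/
theorem genus1_condensate_second_moment (l1 l2 l3 : ℝ)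
    (h1 : 0 < l1) (h12 : l1 < l2) (h23 : l2 < l3) :
    (16 / (3 * Real.pi)) *
        (∫ η in (0:ℝ)..l1,
          η ^ 4 * ((l3 ^ 2 - (l3 ^ 2 - l1 ^ 2) *
              (ellipticE ((l2 ^ 2 - l1 ^ 2) / (l3 ^ 2 - l1 ^ 2)) /
                ellipticK ((l2 ^ 2 - l1 ^ 2) / (l3 ^ 2 - l1 ^ 2)))) - η ^ 2) /
            Real.sqrt ((l1 ^ 2 - η ^ 2) * (l2 ^ 2 - η ^ 2) * (l3 ^ 2 - η ^ 2))) +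
      (16 / (3 * Real.pi)) *
        (∫ η in l2..l3,
          η ^ 4 * (η ^ 2 - (l3 ^ 2 - (l3 ^ 2 - l1 ^ 2) *
              (ellipticE ((l2 ^ 2 - l1 ^ 2) / (l3 ^ 2 - l1 ^ 2)) /
                ellipticK ((l2 ^ 2 - l1 ^ 2) / (l3 ^ 2 - l1 ^ 2))))) /
            Real.sqrt ((η ^ 2 - l1 ^ 2) * (η ^ 2 - l2 ^ 2) * (l3 ^ 2 - η ^ 2))) =
      (2 * (l1 ^ 2 + l2 ^ 2 + l3 ^ 2) / 3) *
        (l1 ^ 2 + l2 ^ 2 - l3 ^ 2 + 2 * (l3 ^ 2 - l1 ^ 2) *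
          (ellipticE ((l2 ^ 2 - l1 ^ 2) / (l3 ^ 2 - l1 ^ 2)) /
            ellipticK ((l2 ^ 2 - l1 ^ 2) / (l3 ^ 2 - l1 ^ 2)))) +
      (l1 ^ 4 + l2 ^ 4 + l3 ^ 4 - 2 * l1 ^ 2 * l2 ^ 2 - 2 * l2 ^ 2 * l3 ^ 2 -
        2 * l1 ^ 2 * l3 ^ 2) / 3 := by
  rw [genus1_condensate_second_moment_general h1 h12 h23]
  ring
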